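/- arXiv:1106.4583 — 2 statements merged into one kernel-verified Lean document; each statement's English description precedes it below -/
import Mathlib

section
/- τ has a finite limit in each direction: there exist real numbers a and b such that τ(s) → a as s → +∞ and τ(s) → b as s → −∞. -/
open Filter Topology

/- Context: `h > 0`; `τ, ν : ℝ → ℝ` solve the ODE system of the generating curve of a
helicoidal surface of pitch `h` rotating with unit angular speed under mean curvature flow:
`τ' = ((τ² + h²)/(τ² + ν² + h²))(1 + τν)`, `ν' = (τν − τ²(τ² + h²))/(τ² + ν² + h²)`,
with `r = √(τ² + ν²)` and signed curvature `k = (τ(τ² + h²) − ν)/(r² + h²)`. -/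

lemma aux_mono (f f' : ℝ → ℝ) (hf : ∀ s, HasDerivAt f (f' s) s) (s0 : ℝ)
    (h0 : ∀ s, s0 ≤ s → 0 ≤ f' s) : MonotoneOn f (Set.Ici s0) := by
  apply monotoneOn_of_deriv_nonneg (convex_Ici s0)
  · exact fun x _ => (hf x).continuousAt.continuousWithinAt
  · exact fun x _ => (hf x).differentiableAt.differentiableWithinAt
  · intro x hx
    rw [interior_Ici] at hx
    rw [(hf x).deriv]
    exact h0 x (le_of_lt hx)

lemma aux_conv (f f' : ℝ → ℝ) (hf : ∀ s, HasDerivAt f (f' s) s) (s0 M : ℝ)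
    (h0 : ∀ s, s0 ≤ s → 0 ≤ f' s) (hM : ∀ s, s0 ≤ s → f s ≤ M) :
    ∃ a, Tendsto f atTop (𝓝 a) := by
  have hm := aux_mono f f' hf s0 h0
  have hg : Monotone (fun s => f (max s s0)) := fun x y hxy =>
    hm (le_max_right x s0) (le_max_right y s0) (max_le_max_right s0 hxy)
  have hb : BddAbove (Set.range (fun s => f (max s s0))) := by
    refine ⟨M, ?_⟩
    rintro _ ⟨s, rfl⟩
    exact hM _ (le_max_right s s0)
  refine ⟨_, (tendsto_atTop_ciSup hg hb).congr' ?_⟩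
  filter_upwards [eventually_ge_atTop s0] with s hs
  simp [max_eq_left hs]

lemma aux_pos (f f' : ℝ → ℝ) (hf : ∀ s, HasDerivAt f (f' s) s) (s0 : ℝ)
    (h0 : 0 < f s0) (h1 : ∀ s, s0 ≤ s → f s = 0 → 0 < f' s) :
    ∀ s, s0 ≤ s → 0 < f s := by
  have hnn : ∀ s, s0 ≤ s → 0 ≤ f s := by
    intro s hs
    refine image_le_of_deriv_right_lt_deriv_boundary' (f := fun _ => (0:ℝ)) (f' := fun _ => 0)
      (B := f) (B' := f') (a := s0) (b := s) continuousOn_const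
      (fun x _ => hasDerivWithinAt_const _ _ _) h0.le
      (fun x _ => (hf x).continuousAt.continuousWithinAt)
      (fun x _ => (hf x).hasDerivWithinAt) ?_ ⟨hs, le_rfl⟩
    intro x hx hx0
    exact h1 x hx.1 hx0.symm
  intro s hs
  rcases (hnn s hs).lt_or_eq with h | h
  · exact h
  · exfalso
    have hlt : s0 < s := by
      rcases hs.lt_or_eq with h' | h'
      · exact h'
      · subst h'; linarith
    have hmin : IsLocalMin f s := by
      filter_upwards [lt_mem_nhds hlt] with x hx
      rw [← h]; exact hnn x (le_of_lt hx)
    have := hmin.hasDerivAt_eq_zero (hf s)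
    have := h1 s hs h.symm
    linarith

lemma aux_fwd
    (h : ℝ) (hh : 0 < h) (τ ν : ℝ → ℝ)
    (hτ : ∀ s : ℝ, HasDerivAt τ
      ((τ s ^ 2 + h ^ 2) / (τ s ^ 2 + ν s ^ 2 + h ^ 2) * (1 + τ s * ν s)) s)
    (hν : ∀ s : ℝ, HasDerivAt ν
      ((τ s * ν s - τ s ^ 2 * (τ s ^ 2 + h ^ 2)) / (τ s ^ 2 + ν s ^ 2 + h ^ 2)) s) :
    ∃ a : ℝ, Tendsto τ atTop (𝓝 a) := by
  have hh2 : 0 < h ^ 2 := by positivity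
  have hA : ∀ s, 0 < τ s ^ 2 + h ^ 2 := fun s => by positivity
  have hD : ∀ s, 0 < τ s ^ 2 + ν s ^ 2 + h ^ 2 := fun s => by positivity
  by_cases hneg : ∀ s, τ s ≤ 0
  · -- `τ ≤ 0` forever
    have hρ : ∀ s, HasDerivAt (fun s => -(τ s ^ 2 + ν s ^ 2)) (-(2 * τ s)) s := by
      intro s
      have := (((hτ s).pow 2).add ((hν s).pow 2)).neg
      refine this.congr_deriv ?_
      have := (hD s).ne'
      field_simp
      ring
    obtain ⟨L1, hL1⟩ := aux_conv _ _ hρ 0 0 (fun s _ => by linarith [hneg s])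
      (fun s _ => by nlinarith [sq_nonneg (τ s), sq_nonneg (ν s)])
    have hR := aux_mono _ _ hρ 0 (fun s _ => by linarith [hneg s])
    set R := τ 0 ^ 2 + ν 0 ^ 2 with hRdef
    have hRb : ∀ s, 0 ≤ s → τ s ^ 2 + ν s ^ 2 ≤ R := by
      intro s hs
      have := hR (Set.mem_Ici.2 le_rfl) (Set.mem_Ici.2 hs) hs
      simp only at this
      linarith
    have hR0 : 0 ≤ R := by positivity
    have hσ : ∀ s, HasDerivAt (fun s => -(τ s ^ 2 + (1 + R) * (τ s ^ 2 + ν s ^ 2)))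
        (-(2 * τ s * ((τ s ^ 2 + h ^ 2) / (τ s ^ 2 + ν s ^ 2 + h ^ 2) * (1 + τ s * ν s)
          + (1 + R)))) s := by
      intro s
      have := ((hρ s).const_mul (1 + R)).sub ((hτ s).pow 2)
      have he : (fun s => -(τ s ^ 2 + (1 + R) * (τ s ^ 2 + ν s ^ 2))) =
          ((fun y => (1 + R) * -(τ y ^ 2 + ν y ^ 2)) - τ ^ 2) := by
        funext x
        simp only [Pi.sub_apply, Pi.pow_apply]
        ring
      rw [he]
      refine this.congr_deriv ?_
      push_cast
      ring
    obtain ⟨L2, hL2⟩ := aux_conv _ _ hσ 0 0 (fun s hs => by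
        have h1 : -(1 + R) ≤ (τ s ^ 2 + h ^ 2) / (τ s ^ 2 + ν s ^ 2 + h ^ 2) * (1 + τ s * ν s) := by
          have hq0 : 0 ≤ (τ s ^ 2 + h ^ 2) / (τ s ^ 2 + ν s ^ 2 + h ^ 2) :=
            (div_pos (hA s) (hD s)).le
          have hq1 : (τ s ^ 2 + h ^ 2) / (τ s ^ 2 + ν s ^ 2 + h ^ 2) ≤ 1 := by
            rw [div_le_one (hD s)]; nlinarith [sq_nonneg (ν s)]
          have h2 : -R ≤ 1 + τ s * ν s := by
            nlinarith [hRb s hs, sq_nonneg (τ s + ν s)]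
          nlinarith
        nlinarith [hneg s])
      (fun s _ => by
        have : 0 ≤ τ s ^ 2 + (1 + R) * (τ s ^ 2 + ν s ^ 2) := by positivity
        linarith)
    have h3 : Tendsto (fun s => τ s ^ 2) atTop (𝓝 ((1 + R) * L1 - L2)) := by
      refine ((hL1.const_mul (1 + R)).sub hL2).congr ?_
      intro s; ring
    refine ⟨_, (h3.sqrt.neg).congr ?_⟩
    intro s
    rw [Real.sqrt_sq_eq_abs, abs_of_nonpos (hneg s), neg_neg]
  push Not at hneg
  obtain ⟨s0, hs0⟩ := hneg
  have hpos : ∀ s, s0 ≤ s → 0 < τ s := by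
    apply aux_pos τ _ hτ s0 hs0
    intro s _ hs
    have := div_pos (hA s) (hD s)
    rw [hs] at this ⊢
    simpa using this
  by_cases hνn : ∀ s, s0 ≤ s → 0 ≤ ν s
  · -- `τ > 0`, `ν ≥ 0`
    have hτ' : ∀ s, s0 ≤ s →
        0 ≤ (τ s ^ 2 + h ^ 2) / (τ s ^ 2 + ν s ^ 2 + h ^ 2) * (1 + τ s * ν s) := by
      intro s hs
      have h1 := (hpos s hs).le
      have h2 := hνn s hs
      positivity
    have hmono := aux_mono τ _ hτ s0 hτ'
    have hm1 := aux_mono (fun s => τ s / h ^ 2 - ν s) _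
      (fun s => ((hτ s).div_const (h ^ 2)).sub (hν s)) s0 (by
        intro s hs
        have h1 := (hpos s hs)
        have h2 := hνn s hs
        have hd := hD s
        have : (τ s ^ 2 + h ^ 2) / (τ s ^ 2 + ν s ^ 2 + h ^ 2) * (1 + τ s * ν s) / h ^ 2 -
          (τ s * ν s - τ s ^ 2 * (τ s ^ 2 + h ^ 2)) / (τ s ^ 2 + ν s ^ 2 + h ^ 2)
          = ((τ s ^ 2 + h ^ 2) + τ s ^ 2 * (τ s * ν s) + h ^ 2 * τ s ^ 2 * (τ s ^ 2 + h ^ 2)) /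
            (h ^ 2 * (τ s ^ 2 + ν s ^ 2 + h ^ 2)) := by
          have := hd.ne'
          field_simp
          ring
        rw [this]
        positivity)
    obtain ⟨C, hC0, hC⟩ : ∃ C, 0 ≤ C ∧ ∀ s, s0 ≤ s → ν s ≤ C + τ s / h ^ 2 := by
      refine ⟨|ν s0 - τ s0 / h ^ 2|, abs_nonneg _, fun s hs => ?_⟩
      have := hm1 (Set.mem_Ici.2 le_rfl) (Set.mem_Ici.2 hs) hs
      simp only at this
      have := le_abs_self (ν s0 - τ s0 / h ^ 2)
      linarith
    obtain ⟨M, hM⟩ : ∃ M, ∀ s, s0 ≤ s → τ s ≤ M := by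
      -- threshold
      obtain ⟨K, hK0, hK⟩ : ∃ K : ℝ, 0 < K ∧ ∀ t, K ≤ t →
          t * (C + t / h ^ 2) + h ^ 2 / 4 * (t ^ 2 + h ^ 2) * (1 + t * (C + t / h ^ 2))
            ≤ t ^ 2 * (t ^ 2 + h ^ 2) := by
        refine ⟨1 + 8 * C + h ^ 2 * C + h ^ 2 + 8 / h ^ 2, by positivity, ?_⟩
        intro t ht
        have e1 : 0 ≤ h ^ 2 * C := by positivity
        have e2 : 0 ≤ 8 / h ^ 2 := by positivity
        have t1 : 1 ≤ t := by linarith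
        have t2 : 8 * C ≤ t := by linarith
        have t3 : h ^ 2 * C ≤ t := by linarith
        have t4 : h ^ 2 ≤ t := by linarith
        have t5 : 8 / h ^ 2 ≤ t := by linarith
        have t6 : t ≤ t ^ 2 := by nlinarith
        have t7 : t ^ 2 ≤ t ^ 3 := by nlinarith [sq_nonneg t]
        have a1 : t / h ^ 2 ≤ t ^ 3 / 8 := by
          have : t / h ^ 2 = t * (8 / h ^ 2) / 8 := by ring
          rw [this]
          nlinarith
        have a2 : C + t / h ^ 2 ≤ t ^ 3 / 4 := by linarith
        have a3 : t * (C + t / h ^ 2) ≤ t * (t ^ 3 / 4) := by gcongr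
        have a4 : h ^ 2 + h ^ 2 * C * t ≤ 2 * t ^ 2 := by nlinarith
        have a5 : (t ^ 2 + h ^ 2) * (h ^ 2 + h ^ 2 * C * t) ≤ (t ^ 2 + h ^ 2) * (2 * t ^ 2) := by
          gcongr
        have a6 : h ^ 2 / 4 * (t ^ 2 + h ^ 2) * (1 + t * (C + t / h ^ 2))
            = (t ^ 2 + h ^ 2) * (h ^ 2 + h ^ 2 * C * t) / 4 + (t ^ 2 + h ^ 2) * t ^ 2 / 4 := by
          field_simp
          ring
        rw [a6]
        have a7 : 0 ≤ h ^ 2 * t ^ 2 := by positivity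
        nlinarith
      by_cases hbd : ∀ s, s0 ≤ s → τ s ≤ K
      · exact ⟨K, hbd⟩
      push Not at hbd
      obtain ⟨s1, hs1, hs1K⟩ := hbd
      have hge : ∀ s, s1 ≤ s → K ≤ τ s := fun s hs =>
        hs1K.le.trans (hmono (Set.mem_Ici.2 hs1) (Set.mem_Ici.2 (hs1.trans hs)) hs)
      have hm2 := aux_mono (fun s => -(ν s + h ^ 2 / 4 * τ s)) _
        (fun s => ((hν s).add ((hτ s).const_mul (h ^ 2 / 4))).neg) s1 (by
          intro s hs
          have h1 := (hpos s (hs1.trans hs))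
          have h2 := hνn s (hs1.trans hs)
          have h3 := hC s (hs1.trans hs)
          have h4 := hK _ (hge s hs)
          have hd := hD s
          have h5 : τ s * ν s ≤ τ s * (C + τ s / h ^ 2) := by gcongr
          have h6 : h ^ 2 / 4 * (τ s ^ 2 + h ^ 2) * (1 + τ s * ν s)
            ≤ h ^ 2 / 4 * (τ s ^ 2 + h ^ 2) * (1 + τ s * (C + τ s / h ^ 2)) := by gcongr
          have : -((τ s * ν s - τ s ^ 2 * (τ s ^ 2 + h ^ 2)) / (τ s ^ 2 + ν s ^ 2 + h ^ 2) +
              h ^ 2 / 4 * ((τ s ^ 2 + h ^ 2) / (τ s ^ 2 + ν s ^ 2 + h ^ 2) * (1 + τ s * ν s)))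
            = (τ s ^ 2 * (τ s ^ 2 + h ^ 2) - τ s * ν s
                - h ^ 2 / 4 * (τ s ^ 2 + h ^ 2) * (1 + τ s * ν s)) /
              (τ s ^ 2 + ν s ^ 2 + h ^ 2) := by
            have := hd.ne'
            field_simp
            ring
          rw [this]
          apply div_nonneg _ hd.le
          linarith)
      refine ⟨(ν s1 + h ^ 2 / 4 * τ s1) / (h ^ 2 / 4), fun s hs => ?_⟩
      rw [le_div_iff₀ (by positivity)]
      rcases le_total s1 s with hle | hle
      · have := hm2 (Set.mem_Ici.2 le_rfl) (Set.mem_Ici.2 hle) hle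
        simp only at this
        have := hνn s hs
        linarith
      · have h1 := hmono (Set.mem_Ici.2 hs) (Set.mem_Ici.2 hs1) hle
        have := hνn s1 hs1
        nlinarith
    exact aux_conv τ _ hτ s0 M hτ' hM
  push Not at hνn
  obtain ⟨s1, hs1, hν1⟩ := hνn
  have hpos1 : ∀ s, s1 ≤ s → 0 < τ s := fun s hs => hpos s (hs1.trans hs)
  have hνneg : ∀ s, s1 ≤ s → ν s < 0 := by
    have := aux_pos (fun s => - ν s) _ (fun s => (hν s).neg) s1 (by simpa using hν1) (by
      intro s hs h0
      have h0' : ν s = 0 := by simpa using h0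
      have h1 := hpos1 s hs
      have hd := hD s
      rw [← neg_div]
      apply div_pos _ hd
      rw [h0']
      have : 0 < τ s ^ 2 * (τ s ^ 2 + h ^ 2) := by positivity
      linarith)
    intro s hs
    have := this s hs
    linarith
  have hν'neg : ∀ s, s1 ≤ s →
      (τ s * ν s - τ s ^ 2 * (τ s ^ 2 + h ^ 2)) / (τ s ^ 2 + ν s ^ 2 + h ^ 2) < 0 := by
    intro s hs
    have h1 := hpos1 s hs
    apply div_neg_of_neg_of_pos _ (hD s)
    have h2 := mul_neg_of_pos_of_neg h1 (hνneg s hs)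
    have : 0 < τ s ^ 2 * (τ s ^ 2 + h ^ 2) := by positivity
    linarith
  by_cases hp : ∀ s, s1 ≤ s → 0 ≤ 1 + τ s * ν s
  · have hm := aux_mono (fun s => - ν s) _ (fun s => (hν s).neg) s1
      (fun s hs => by linarith [hν'neg s hs])
    apply aux_conv τ _ hτ s1 (1 / (-ν s1))
      (fun s hs => mul_nonneg (div_pos (hA s) (hD s)).le (hp s hs))
    intro s hs
    rw [le_div_iff₀ (by linarith)]
    have h1 := hm (Set.mem_Ici.2 le_rfl) (Set.mem_Ici.2 hs) hs
    simp only at h1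
    nlinarith [hp s hs, hpos1 s hs]
  · push Not at hp
    obtain ⟨s2, hs2, hp2⟩ := hp
    have hq := aux_pos (fun s => -(1 + τ s * ν s)) _
      (fun s => (((hτ s).mul (hν s)).const_add 1).neg) s2 (by linarith) (by
        intro s hs h0
        have h0' : 1 + τ s * ν s = 0 := by linarith
        rw [h0']
        have := mul_neg_of_pos_of_neg (hpos1 s (hs2.trans hs)) (hν'neg s (hs2.trans hs))
        linarith)
    obtain ⟨a, ha⟩ := aux_conv (fun s => - τ s) _ (fun s => (hτ s).neg) s2 0 (by
      intro s hs
      have h1 := hq s hs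
      have h2 := div_pos (hA s) (hD s)
      nlinarith) (fun s hs => by linarith [hpos1 s (hs2.trans hs)])
    exact ⟨-a, by simpa using ha.neg⟩

/-- Lemma 4.5. `τ` has a finite limit in each direction. -/
theorem tau_finite_limits
    (h : ℝ) (hh : 0 < h) (τ ν : ℝ → ℝ)
    (hτ : ∀ s : ℝ, HasDerivAt τ
      ((τ s ^ 2 + h ^ 2) / (τ s ^ 2 + ν s ^ 2 + h ^ 2) * (1 + τ s * ν s)) s)
    (hν : ∀ s : ℝ, HasDerivAt ν
      ((τ s * ν s - τ s ^ 2 * (τ s ^ 2 + h ^ 2)) / (τ s ^ 2 + ν s ^ 2 + h ^ 2)) s) :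
    ∃ a b : ℝ, Tendsto τ atTop (𝓝 a) ∧ Tendsto τ atBot (𝓝 b) := by
  obtain ⟨a, ha⟩ := aux_fwd h hh τ ν hτ hν
  obtain ⟨b, hb⟩ := aux_fwd h hh (fun s => - τ (-s)) (fun s => - ν (-s))
    (fun s => by
      have := ((hτ (-s)).scomp s (hasDerivAt_neg s)).neg
      refine this.congr_deriv ?_
      simp)
    (fun s => by
      have := ((hν (-s)).scomp s (hasDerivAt_neg s)).neg
      refine this.congr_deriv ?_
      simp)
  refine ⟨a, -b, ha, ?_⟩
  have := (hb.comp tendsto_neg_atBot_atTop).neg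
  refine this.congr ?_
  intro s
  simp
end

section
/- The curvature k(s) tends to 0 as s → +∞ and as s → −∞; moreover k(s) > 0 for all sufficiently large s and k(s) < 0 for all sufficiently negative s. -/
open Filter Topology

lemma aux_grow (f f' : ℝ → ℝ) (a c : ℝ) (hf : ∀ s, a ≤ s → HasDerivAt f (f' s) s)
    (hc : ∀ s, a ≤ s → c ≤ f' s) : ∀ s, a ≤ s → f a + c * (s - a) ≤ f s := by
  intro s hs
  have := (convex_Ici a).mul_sub_le_image_sub_of_le_deriv (f := f) (C := c)
    (fun x hx => (hf x hx).continuousAt.continuousWithinAt)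
    (fun x hx => (hf x (interior_subset hx)).differentiableAt.differentiableWithinAt)
    (fun x hx => by rw [(hf x (interior_subset hx)).deriv]; exact hc x (interior_subset hx))
    a (Set.mem_Ici.2 le_rfl) s hs hs
  linarith

lemma aux_unbdd (f f' : ℝ → ℝ) (a c B : ℝ) (hf : ∀ s, a ≤ s → HasDerivAt f (f' s) s)
    (hcp : 0 < c) (hc : ∀ s, a ≤ s → c ≤ f' s) (hB : ∀ s, a ≤ s → f s ≤ B) : False := by
  have hB0 := hB a le_rfl
  have hs : a ≤ a + ((B - f a) / c + 1) := by
    have : 0 ≤ (B - f a) / c := div_nonneg (by linarith) hcp.le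
    linarith
  have h1 := aux_grow f f' a c hf hc _ hs
  have h2 := hB _ hs
  have h3 : c * (a + ((B - f a) / c + 1) - a) = B - f a + c := by field_simp; ring
  linarith

lemma aux_barrier (f f' : ℝ → ℝ) (a : ℝ) (hf : ∀ s, HasDerivAt f (f' s) s)
    (h0 : ∀ s, a ≤ s → f s = 0 → 0 < f' s) (ha : 0 < f a) : ∀ s, a ≤ s → 0 < f s := by
  have key : ∀ s, a ≤ s → 0 ≤ f s := by
    intro s hs
    have := image_le_of_deriv_right_lt_deriv_boundary (f := fun x => - f x)
      (f' := fun x => - f' x) (a := a) (b := s) (B := fun _ => 0) (B' := fun _ => 0)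
      (fun x _ => (hf x).neg.continuousAt.continuousWithinAt)
      (fun x _ => (hf x).neg.hasDerivWithinAt) (by simpa using ha.le)
      (fun x => hasDerivAt_const x 0)
      (fun x hx hx0 => by
        have := h0 x hx.1 (by simpa using hx0)
        simpa using this) (Set.right_mem_Icc.2 hs)
    simpa using this
  intro s hs
  rcases (key s hs).lt_or_eq with h | h
  · exact h
  exfalso
  have has : a < s := lt_of_le_of_ne hs (fun e => by subst e; linarith)
  have hmin : IsLocalMin f s := by
    filter_upwards [Ioi_mem_nhds has] with x hx
    rw [← h]; exact key x (le_of_lt hx)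
  have := hmin.hasDerivAt_eq_zero (hf s)
  have := h0 s hs h.symm
  linarith

lemma aux_top
    (h : ℝ) (hh : 0 < h) (τ ν : ℝ → ℝ)
    (hτ : ∀ s : ℝ, HasDerivAt τ
      ((τ s ^ 2 + h ^ 2) / (τ s ^ 2 + ν s ^ 2 + h ^ 2) * (1 + τ s * ν s)) s)
    (hν : ∀ s : ℝ, HasDerivAt ν
      ((τ s * ν s - τ s ^ 2 * (τ s ^ 2 + h ^ 2)) / (τ s ^ 2 + ν s ^ 2 + h ^ 2)) s) :
    Tendsto (fun s => (τ s * (τ s ^ 2 + h ^ 2) - ν s) / (τ s ^ 2 + ν s ^ 2 + h ^ 2)) atTop (𝓝 0) ∧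
    (∀ᶠ s in atTop, 0 < (τ s * (τ s ^ 2 + h ^ 2) - ν s) / (τ s ^ 2 + ν s ^ 2 + h ^ 2)) := by
  have hD : ∀ s, 0 < τ s ^ 2 + ν s ^ 2 + h ^ 2 := fun s => by positivity
  have hr : ∀ s, HasDerivAt (fun s => τ s ^ 2 + ν s ^ 2) (2 * τ s) s := by
    intro s
    have := ((hτ s).pow 2).add ((hν s).pow 2)
    refine this.congr_deriv ?_
    have := (hD s).ne'
    push_cast
    simp only [Nat.add_one_sub_one, pow_one]
    field_simp
    ring
  -- step 1
  have h1 : ∃ a, 0 < τ a := by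
    by_contra! hneg
    obtain ⟨R, hR⟩ : ∃ R, R = τ 0 ^ 2 + ν 0 ^ 2 + 1 := ⟨_, rfl⟩
    have hRpos : 1 ≤ R := by rw [hR]; nlinarith [sq_nonneg (τ 0), sq_nonneg (ν 0)]
    have hrb : ∀ s, 0 ≤ s → τ s ^ 2 + ν s ^ 2 ≤ R ^ 2 := by
      intro s hs
      have := aux_grow (fun s => -(τ s ^ 2 + ν s ^ 2)) (fun s => -(2 * τ s)) 0 0
        (fun s _ => (hr s).neg) (fun s _ => by linarith [hneg s]) s hs
      nlinarith
    refine aux_unbdd (fun s => τ s - R / 2 * (τ s ^ 2 + ν s ^ 2)) _ 0 (h ^ 2 / (R ^ 2 + h ^ 2)) 0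
      (fun s _ => (hτ s).sub ((hr s).const_mul (R / 2))) (by positivity) ?_ ?_
    · intro s hs
      have hb := hrb s hs
      have hνR : ν s ≤ R := abs_le_of_sq_le_sq' (by nlinarith [sq_nonneg (τ s)]) (by linarith) |>.2
      have hq1 : (τ s ^ 2 + h ^ 2) / (τ s ^ 2 + ν s ^ 2 + h ^ 2) ≤ 1 := by
        rw [div_le_one (hD s)]; nlinarith [sq_nonneg (ν s)]
      have hq2 : h ^ 2 / (R ^ 2 + h ^ 2) ≤ (τ s ^ 2 + h ^ 2) / (τ s ^ 2 + ν s ^ 2 + h ^ 2) := by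
        apply div_le_div₀ (by positivity) (by nlinarith [sq_nonneg (τ s)]) (hD s) (by linarith)
      have hq0 : 0 ≤ (τ s ^ 2 + h ^ 2) / (τ s ^ 2 + ν s ^ 2 + h ^ 2) := by positivity
      generalize (τ s ^ 2 + h ^ 2) / (τ s ^ 2 + ν s ^ 2 + h ^ 2) = q at *
      have e1 : τ s * R ≤ τ s * ν s := mul_le_mul_of_nonpos_left hνR (hneg s)
      have e2 : q * (τ s * R) ≤ q * (τ s * ν s) := mul_le_mul_of_nonneg_left e1 hq0
      have e3 : τ s * R ≤ 0 := mul_nonpos_of_nonpos_of_nonneg (hneg s) (by linarith)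
      nlinarith
    · intro s _
      have : 0 ≤ R / 2 * (τ s ^ 2 + ν s ^ 2) := by positivity
      linarith [hneg s]
  obtain ⟨a, ha⟩ := h1
  have hpos : ∀ s, a ≤ s → 0 < τ s := by
    refine aux_barrier τ _ a hτ ?_ ha
    intro s _ h0
    have := hD s
    rw [h0] at *
    simp only [zero_mul, add_zero, mul_one]
    positivity
  -- step 2
  have h2 : ∃ b, a ≤ b ∧ 1 + τ b * ν b < 0 := by
    by_contra! hw
    have hmono : ∀ s, a ≤ s → τ a ≤ τ s := by
      intro s hs
      have := aux_grow τ _ a 0 (fun s _ => hτ s)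
        (fun s hs => mul_nonneg (by positivity) (hw s hs)) s hs
      linarith
    have hF : ∀ s, a ≤ s → HasDerivAt (fun s => -(ν s + (τ s)⁻¹)) _ s := fun s hs =>
      ((hν s).add ((hτ s).inv (hpos s hs).ne')).neg
    have hF' : ∀ s, a ≤ s → (τ s ^ 2 * (τ s ^ 2 + h ^ 2)) / (τ s ^ 2 + ν s ^ 2 + h ^ 2) ≤
        -((τ s * ν s - τ s ^ 2 * (τ s ^ 2 + h ^ 2)) / (τ s ^ 2 + ν s ^ 2 + h ^ 2) +
         -((τ s ^ 2 + h ^ 2) / (τ s ^ 2 + ν s ^ 2 + h ^ 2) * (1 + τ s * ν s)) / τ s ^ 2) := by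
      intro s hs
      have h3 := hpos s hs
      have h4 := hw s hs
      have h5 := hD s
      rw [← sub_nonneg]
      have : -((τ s * ν s - τ s ^ 2 * (τ s ^ 2 + h ^ 2)) / (τ s ^ 2 + ν s ^ 2 + h ^ 2) +
         -((τ s ^ 2 + h ^ 2) / (τ s ^ 2 + ν s ^ 2 + h ^ 2) * (1 + τ s * ν s)) / τ s ^ 2) -
         (τ s ^ 2 * (τ s ^ 2 + h ^ 2)) / (τ s ^ 2 + ν s ^ 2 + h ^ 2)
         = (h ^ 2 * (1 + τ s * ν s) + τ s ^ 2) / (τ s ^ 2 * (τ s ^ 2 + ν s ^ 2 + h ^ 2)) := by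
        field_simp
        ring
      rw [this]
      positivity
    have hνle : ∀ s, a ≤ s → ν s ≤ ν a + (τ a)⁻¹ := by
      intro s hs
      have := aux_grow _ _ a 0 hF (fun s hs => le_trans (by positivity) (hF' s hs)) s hs
      have := inv_pos.2 (hpos s hs)
      linarith
    have hνF : ∀ s, a ≤ s → 0 ≤ ν s + (τ s)⁻¹ := by
      intro s hs
      have h3 := hpos s hs
      have : ν s + (τ s)⁻¹ = (1 + τ s * ν s) / τ s := by field_simp; ring
      rw [this]
      exact div_nonneg (hw s hs) h3.le
    have hνge : ∀ s, a ≤ s → -(τ a)⁻¹ ≤ ν s := by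
      intro s hs
      have := hνF s hs
      have : (τ s)⁻¹ ≤ (τ a)⁻¹ := inv_anti₀ ha (hmono s hs)
      linarith
    obtain ⟨M, hM⟩ : ∃ M, ∀ s, a ≤ s → ν s ^ 2 ≤ M := by
      refine ⟨(|ν a| + (τ a)⁻¹) ^ 2, fun s hs => ?_⟩
      have := inv_pos.2 ha
      apply sq_le_sq'
      · linarith [hνge s hs, abs_nonneg (ν a)]
      · linarith [hνle s hs, le_abs_self (ν a)]
    have hM0 : 0 ≤ M := le_trans (sq_nonneg _) (hM a le_rfl)
    refine aux_unbdd _ _ a (τ a ^ 2 * (h ^ 2 / (h ^ 2 + M))) 0 hF (by positivity) ?_ ?_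
    · intro s hs
      refine le_trans ?_ (hF' s hs)
      rw [mul_div_assoc]
      have e1 : τ a ^ 2 ≤ τ s ^ 2 := pow_le_pow_left₀ ha.le (hmono s hs) 2
      apply mul_le_mul e1 _ (by positivity) (by positivity)
      have := hM s hs
      rw [div_le_div_iff₀ (by positivity) (hD s)]
      nlinarith [mul_nonneg (sq_nonneg (τ s)) hM0, mul_le_mul_of_nonneg_left this (sq_nonneg h)]
    · intro s hs
      have := hνF s hs
      linarith
  obtain ⟨b, hab, hb⟩ := h2
  have hwneg : ∀ s, b ≤ s → 1 + τ s * ν s < 0 := by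
    intro s hs
    have := aux_barrier (fun s => -(1 + τ s * ν s)) _ b
      (fun s => (((hτ s).mul (hν s)).const_add 1).neg) ?_ (neg_pos.2 hb) s hs
    · exact neg_pos.1 this
    intro s hs h0
    have h0 : 1 + τ s * ν s = 0 := neg_eq_zero.1 h0
    have hp := hpos s (hab.trans hs)
    have h5 := hD s
    have e : τ s * ν s = -1 := by linarith
    rw [h0, e]
    have : -((τ s ^ 2 + h ^ 2) / (τ s ^ 2 + ν s ^ 2 + h ^ 2) * 0 * ν s + τ s * ((-1 - τ s ^ 2 * (τ s ^ 2 + h ^ 2)) / (τ s ^ 2 + ν s ^ 2 + h ^ 2))) = τ s * ((1 + τ s ^ 2 * (τ s ^ 2 + h ^ 2)) / (τ s ^ 2 + ν s ^ 2 + h ^ 2)) := by ring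
    rw [this]
    positivity
  have hνneg : ∀ s, b ≤ s → ν s < 0 := by
    intro s hs
    have h3 := hwneg s hs
    have h4 := hpos s (hab.trans hs)
    by_contra! h5
    have := mul_nonneg h4.le h5
    linarith
  have hkpos : ∀ s, b ≤ s → 0 < (τ s * (τ s ^ 2 + h ^ 2) - ν s) / (τ s ^ 2 + ν s ^ 2 + h ^ 2) := by
    intro s hs
    have h3 := hνneg s hs
    have h4 := hpos s (hab.trans hs)
    apply div_pos _ (hD s)
    have : 0 < τ s * (τ s ^ 2 + h ^ 2) := by positivity
    linarith
  refine ⟨?_, eventually_atTop.2 ⟨b, hkpos⟩⟩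
  have hτle : ∀ s, b ≤ s → τ s ≤ τ b := by
    intro s hs
    have := aux_grow (fun s => - τ s) _ b 0 (fun s _ => (hτ s).neg)
      (fun s hs => neg_nonneg.2 (mul_nonpos_of_nonneg_of_nonpos (by positivity) (hwneg s hs).le)) s hs
    linarith
  have hν'1 : ∀ s, b ≤ s → τ s ^ 2 * (τ s ^ 2 + h ^ 2) / (τ s ^ 2 + ν s ^ 2 + h ^ 2) ≤
      -((τ s * ν s - τ s ^ 2 * (τ s ^ 2 + h ^ 2)) / (τ s ^ 2 + ν s ^ 2 + h ^ 2)) := by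
    intro s hs
    rw [← neg_div]
    apply div_le_div_of_nonneg_right _ (hD s).le
    linarith [hwneg s hs]
  have hanti : ∀ s t, b ≤ s → s ≤ t → ν t ≤ ν s := by
    intro s t hs hst
    have := aux_grow (fun s => - ν s) _ s 0 (fun s _ => (hν s).neg)
      (fun t ht => le_trans (by positivity) (hν'1 t (hs.trans ht))) t hst
    linarith
  have hbp : 0 < τ b := hpos b hab
  have hνbot : Tendsto ν atTop atBot := by
    rw [tendsto_atBot]
    intro M
    have : ∃ c, b ≤ c ∧ ν c ≤ M := by
      by_contra! hM
      have hM0 : M < 0 := (hM b le_rfl).trans (hνneg b le_rfl)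
      refine aux_unbdd (fun s => - ν s) _ b
        ((1 / (-M)) ^ 2 * h ^ 2 / (τ b ^ 2 + M ^ 2 + h ^ 2)) (-M) (fun s _ => (hν s).neg)
        (by have : 0 < -M := by linarith
            positivity) ?_ (fun s hs => by linarith [hM s hs])
      intro s hs
      refine le_trans ?_ (hν'1 s hs)
      have h4 := hpos s (hab.trans hs)
      have e0 := hτle s hs
      have e1 : 1 / (-M) ≤ τ s := by
        rw [div_le_iff₀ (by linarith)]
        nlinarith [hwneg s hs, hM s hs]
      have e2 : 0 ≤ 1 / (-M) := by
        have : 0 < -M := by linarith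
        positivity
      have e3 : (1 / (-M)) ^ 2 ≤ τ s ^ 2 := pow_le_pow_left₀ e2 e1 2
      apply div_le_div₀ (by positivity) _ (hD s) _
      · apply mul_le_mul e3 _ (by positivity) (by positivity)
        nlinarith [sq_nonneg (τ s)]
      · have : ν s ^ 2 ≤ M ^ 2 := by nlinarith [hM s hs, hνneg s hs]
        have : τ s ^ 2 ≤ τ b ^ 2 := pow_le_pow_left₀ h4.le e0 2
        linarith
    obtain ⟨c, hc, hcM⟩ := this
    filter_upwards [eventually_ge_atTop c] with s hs
    exact (hanti c s hc hs).trans hcM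
  obtain ⟨C, hC⟩ : ∃ C, C = τ b * (τ b ^ 2 + h ^ 2) := ⟨_, rfl⟩
  have hlim : Tendsto (fun s => C * ((ν s)⁻¹ * (ν s)⁻¹) - (ν s)⁻¹) atTop (𝓝 0) := by
    have h0 : Tendsto (fun s => (ν s)⁻¹) atTop (𝓝 0) := tendsto_inv_atBot_zero.comp hνbot
    have := ((h0.mul h0).const_mul C).sub h0
    simpa using this
  refine tendsto_of_tendsto_of_tendsto_of_le_of_le' tendsto_const_nhds hlim
    (eventually_atTop.2 ⟨b, fun s hs => (hkpos s hs).le⟩) (eventually_atTop.2 ⟨b, fun s hs => ?_⟩)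
  have h3 := hνneg s hs
  have h4 := hpos s (hab.trans hs)
  have e0 := hτle s hs
  have e1 : C * ((ν s)⁻¹ * (ν s)⁻¹) - (ν s)⁻¹ = (C - ν s) / ν s ^ 2 := by
    have := h3.ne
    field_simp
  simp only [e1]
  have e2 : τ s * (τ s ^ 2 + h ^ 2) ≤ C := by rw [hC]; gcongr
  have e3 : 0 < τ s * (τ s ^ 2 + h ^ 2) := by positivity
  apply div_le_div₀ (by linarith) (by linarith) (by have := h3.ne; positivity)
  nlinarith [sq_nonneg (τ s), sq_nonneg h]


/- Context: `h > 0`; `τ, ν : ℝ → ℝ` solve the ODE system of the generating curve of a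
helicoidal surface of pitch `h` rotating with unit angular speed under mean curvature flow:
`τ' = ((τ² + h²)/(τ² + ν² + h²))(1 + τν)`, `ν' = (τν − τ²(τ² + h²))/(τ² + ν² + h²)`,
with `r = √(τ² + ν²)` and signed curvature `k = (τ(τ² + h²) − ν)/(r² + h²)`. -/

/-- Lemma 4.6. The curvature `k → 0` in each direction; moreover
`k > 0` for all sufficiently large `s` and `k < 0` for all sufficiently negative `s`. -/
theorem curvature_tendsto_zero
    (h : ℝ) (hh : 0 < h) (τ ν : ℝ → ℝ)
    (hτ : ∀ s : ℝ, HasDerivAt τ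
      ((τ s ^ 2 + h ^ 2) / (τ s ^ 2 + ν s ^ 2 + h ^ 2) * (1 + τ s * ν s)) s)
    (hν : ∀ s : ℝ, HasDerivAt ν
      ((τ s * ν s - τ s ^ 2 * (τ s ^ 2 + h ^ 2)) / (τ s ^ 2 + ν s ^ 2 + h ^ 2)) s)
    (k : ℝ → ℝ)
    (hk : ∀ s : ℝ, k s = (τ s * (τ s ^ 2 + h ^ 2) - ν s) / (τ s ^ 2 + ν s ^ 2 + h ^ 2)) :
    Tendsto k atTop (𝓝 0) ∧ Tendsto k atBot (𝓝 0) ∧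
    (∀ᶠ s in atTop, 0 < k s) ∧ (∀ᶠ s in atBot, k s < 0) := by
  obtain ⟨t1, t2⟩ := aux_top h hh τ ν hτ hν
  obtain ⟨b1, b2⟩ := aux_top h hh (fun s => - τ (-s)) (fun s => - ν (-s))
    (fun s => by
      have := ((hτ (-s)).scomp s (hasDerivAt_neg s)).neg
      refine this.congr_deriv ?_
      simp)
    (fun s => by
      have := ((hν (-s)).scomp s (hasDerivAt_neg s)).neg
      refine this.congr_deriv ?_
      simp)
  have hk' : k = fun s => (τ s * (τ s ^ 2 + h ^ 2) - ν s) / (τ s ^ 2 + ν s ^ 2 + h ^ 2) := funext hk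
  have hkn : ∀ s, (-τ (-s) * ((-τ (-s)) ^ 2 + h ^ 2) - -ν (-s)) /
      ((-τ (-s)) ^ 2 + (-ν (-s)) ^ 2 + h ^ 2) = - k (-s) := by
    intro s
    rw [hk, ← neg_div]
    congr 1 <;> ring
  simp only [hkn] at b1 b2
  refine ⟨hk' ▸ t1, ?_, hk' ▸ t2, ?_⟩
  · have := (b1.comp tendsto_neg_atBot_atTop).neg
    simpa [Function.comp_def] using this
  · have := tendsto_neg_atBot_atTop.eventually b2
    simpa using this
end
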